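/- Let X be a compact metric space, T: X → X a continuous map, and A = (t_i)_{i≥1} a sequence of natural numbers. Define K(A) = lim_{m→∞} limsup_{n→∞} (1/n)|S_A(n,m)|, where S_A(n,m) = {t_i + j : 1 ≤ i ≤ n, 0 ≤ j ≤ m−1}. Unless (K(A) = ∞ and h_top(T) = 0), the variational principle for sequence entropy holds: sup_{μ ∈ M_T(X)} h^A_μ(T) = h^A_top(T), where M_T(X) is the set of T-invariant Borel probability measures on X. -/

import Mathlib

open Filter MeasureTheory

variable {X : Type*} [MetricSpace X]

/-- `spaN T F ε` : the minimal cardinality of a set `E ⊆ X` such that every `x ∈ X`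
satisfies `max_{i ∈ F} dist (T^[i] x) (T^[i] e) ≤ ε` for some `e ∈ E`. -/
noncomputable def spaN (T : X → X) (F : Finset ℕ) (ε : ℝ) : ℕ :=
  sInf {k : ℕ | ∃ E : Finset X, E.card = k ∧
    ∀ x : X, ∃ e ∈ E, ∀ i ∈ F, dist (T^[i] x) (T^[i] e) ≤ ε}

/-- Topological sequence entropy along the sequence `A = (t_i)_{i ≥ 1}`:
`h^A_top(T) = lim_{ε→0⁺} limsup_n (1/n) log spa(T,{t₁,…,t_n},ε)`
(the limit as `ε → 0⁺` of the antitone-in-`ε` quantity is its supremum over `ε > 0`). -/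
noncomputable def seqEntTop (T : X → X) (A : ℕ → ℕ) : EReal :=
  ⨆ (ε : ℝ) (_ : 0 < ε),
    Filter.limsup
      (fun n : ℕ =>
        ((Real.log (spaN T ((Finset.Icc 1 n).image A) ε) / n : ℝ) : EReal))
      Filter.atTop

/-- Topological entropy: topological sequence entropy along `t_i = i − 1`,
i.e. with index sets `{0,…,n−1}`. -/
noncomputable def htopN (T : X → X) : EReal := seqEntTop T (fun i => i - 1)

/-- A finite measurable partition of `X`, modelled with atoms indexed by `Fin k`. -/
def IsMeasPartition {X : Type*} [MeasurableSpace X] {k : ℕ} (ξ : Fin k → Set X) : Prop :=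
  (∀ i, MeasurableSet (ξ i)) ∧ Pairwise (Function.onFun Disjoint ξ) ∧ (⋃ i, ξ i) = Set.univ

/-- `H(ξ^F)` : the Shannon entropy of the join `⋁_{i∈F} T^{−i}ξ`, whose atoms are the
intersections `⋂_{i∈F} T^{−i} ξ(g i)` over all choices `g`. -/
noncomputable def Hjoin {X : Type*} [MeasurableSpace X] (μ : MeasureTheory.Measure X)
    (T : X → X) (F : Finset ℕ) {k : ℕ} (ξ : Fin k → Set X) : ℝ :=
  ∑ g : {i // i ∈ F} → Fin k,
    Real.negMulLog (μ (⋂ i : {i // i ∈ F}, T^[(i : ℕ)] ⁻¹' ξ (g i))).toReal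

/-- Measure-theoretic sequence entropy along `A = (t_i)_{i ≥ 1}`:
`h^A_μ(T) = sup_ξ limsup_n (1/n) H(ξ^{{t₁,…,t_n}})`, the supremum over all finite
measurable partitions `ξ`. -/
noncomputable def seqEntMeas {X : Type*} [MeasurableSpace X] (μ : MeasureTheory.Measure X)
    (T : X → X) (A : ℕ → ℕ) : EReal :=
  ⨆ (k : ℕ) (ξ : Fin k → Set X) (_ : IsMeasPartition ξ),
    Filter.limsup
      (fun n : ℕ => ((Hjoin μ T ((Finset.Icc 1 n).image A) ξ / n : ℝ) : EReal))
      Filter.atTop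

open Pointwise in
/-- `K(A) = lim_{m→∞} limsup_{n→∞} (1/n)|S_A(n,m)|` where
`S_A(n,m) = {t_i + j : 1 ≤ i ≤ n, 0 ≤ j ≤ m−1}` (the limit in `m` of the monotone-in-`m`
quantity is its supremum over `m`). -/
noncomputable def KA (A : ℕ → ℕ) : EReal :=
  ⨆ m : ℕ, Filter.limsup
    (fun n : ℕ =>
      (((((Finset.Icc 1 n).image A + Finset.range m).card : ℝ) / n : ℝ) : EReal))
    Filter.atTop

/-!
Both entropies equal `K(A) * h_top(T)`. Write `A_n = {t₁, …, t_n}`. For `ε > 0` a point is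
determined along `A_n`, up to `2 * ε`, by naming `(m, ε)`-spanning points at the start of each
block in a cover of `A_n` by about `|A_n + {0, …, m - 1}| / m` blocks of length `m`; this gives
`h^A_top(T) ≤ K(A) * h_top(T)`, the product being `⊤` when `K(A) = ⊤` since then `h_top(T) > 0`.

Conversely, let `c` be a real number that is, for infinitely many `n`, at most `1 / n` times the
logarithm of the least size of an `(n, ε)`-spanning set. Misiurewicz's argument (empirical measures
along the orbits of maximal separated sets, and a weak limit) gives an invariant `μ` and a finite
partition `ξ` with `H(ξ^{{0, …, q - 1}}) ≥ q * c` for every `q`. By stationarity and the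
submodularity of Shannon entropy, removing from a finite `F ⊆ ℕ` its largest element lowers `H(ξ^F)`
by at least the entropy rate of `ξ`, which is at least `c`. So `H(ξ^F) ≥ |F| * c` for every `F`, and
taking `F = A_n + {0, …, m - 1}` gives `h^A_μ(T) ≥ c * limsup |A_n + {0, …, m - 1}| / n`.

Finally `h^A_μ(T) ≤ h^A_top(T)` for invariant `μ`, as in Goodwyn's theorem: by Lusin's theorem the
partition is uniformly locally constant off a set of small measure, so its itinerary along `A_n`
is determined by a nearby spanning point together with the times spent in the exceptional set, and
those times carry little entropy.
-/

section Gibbs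

variable {ι κ : Type*} [Fintype ι] [Fintype κ]

lemma sum_negMulLog_le_neg_sum_mul_log {p q : ι → ℝ} (hp : ∀ i, 0 ≤ p i) (hq : ∀ i, 0 ≤ q i)
    (hpq : ∀ i, q i = 0 → p i = 0) (hsum : ∑ i, q i ≤ ∑ i, p i) :
    ∑ i, Real.negMulLog (p i) ≤ -∑ i, p i * Real.log (q i) := by
  have pointwise (i : ι) : Real.negMulLog (p i) + p i * Real.log (q i) ≤ q i - p i := by
    rcases (hp i).eq_or_lt with hpi | hpi
    · simpa [← hpi] using hq i
    have hqi : 0 < q i := (hq i).lt_of_ne fun h => hpi.ne' (hpq i h.symm)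
    calc Real.negMulLog (p i) + p i * Real.log (q i)
      _ = p i * Real.log (q i / p i) := by
        rw [Real.log_div hqi.ne' hpi.ne', Real.negMulLog]; ring
      _ ≤ p i * (q i / p i - 1) := by gcongr; exact Real.log_le_sub_one_of_pos (by positivity)
      _ = q i - p i := by field_simp
  have total := Finset.sum_le_sum fun i (_ : i ∈ Finset.univ) => pointwise i
  rw [Finset.sum_add_distrib, Finset.sum_sub_distrib] at total
  linarith

lemma mul_log_mul_div_of_le {p a b c : ℝ} (hp : 0 ≤ p) (ha : p ≤ a) (hb : p ≤ b) (hc : p ≤ c) :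
    p * Real.log (a * b / c) = p * Real.log a + p * Real.log b - p * Real.log c := by
  rcases hp.eq_or_lt with rfl | hp
  · simp only [zero_mul, add_zero, sub_zero]
  have ha_pos := hp.trans_le ha
  have hb_pos := hp.trans_le hb
  rw [Real.log_div (mul_pos ha_pos hb_pos).ne' (hp.trans_le hc).ne',
    Real.log_mul ha_pos.ne' hb_pos.ne']
  ring

-- Gibbs' inequality against `q i j = (∑ j, p i j) * (∑ i, p i j) / ∑ i, ∑ j, p i j`.
lemma sum_negMulLog_add_le_of_marginals {p : ι → κ → ℝ} (hp : ∀ i j, 0 ≤ p i j) :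
    ∑ i, ∑ j, Real.negMulLog (p i j) + Real.negMulLog (∑ i, ∑ j, p i j) ≤
      ∑ i, Real.negMulLog (∑ j, p i j) + ∑ j, Real.negMulLog (∑ i, p i j) := by
  set a : ι → ℝ := fun i => ∑ j, p i j
  set b : κ → ℝ := fun j => ∑ i, p i j
  set c : ℝ := ∑ i, ∑ j, p i j with hc_def
  have ha_nonneg (i : ι) : 0 ≤ a i := Finset.sum_nonneg fun j _ => hp i j
  have hb_nonneg (j : κ) : 0 ≤ b j := Finset.sum_nonneg fun i _ => hp i j
  have hpa (i : ι) (j : κ) : p i j ≤ a i :=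
    Finset.single_le_sum (fun j _ => hp i j) (Finset.mem_univ j)
  have hpb (i : ι) (j : κ) : p i j ≤ b j :=
    Finset.single_le_sum (f := fun i => p i j) (fun i _ => hp i j) (Finset.mem_univ i)
  have hac (i : ι) : a i ≤ c := Finset.single_le_sum (fun i _ => ha_nonneg i) (Finset.mem_univ i)
  have hb_sum : ∑ j, b j = c := Finset.sum_comm
  have gibbs := sum_negMulLog_le_neg_sum_mul_log (p := fun ij : ι × κ => p ij.1 ij.2)
    (q := fun ij => a ij.1 * b ij.2 / c) (fun ij => hp ij.1 ij.2)
    (fun ij => div_nonneg (mul_nonneg (ha_nonneg _) (hb_nonneg _)) ((ha_nonneg _).trans (hac ij.1)))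
    (fun ij h => (hp _ _).antisymm' <| by
      rcases div_eq_zero_iff.1 h with h | h
      · rcases mul_eq_zero.1 h with h | h
        exacts [h ▸ hpa ij.1 ij.2, h ▸ hpb ij.1 ij.2]
      · exact h ▸ (hpa ij.1 ij.2).trans (hac ij.1))
    (by
      simp only [Fintype.sum_prod_type, ← Finset.sum_div, ← Finset.mul_sum, hb_sum,
        ← Finset.sum_mul]
      exact mul_self_div_self c |>.le)
  have hlog (i : ι) (j : κ) : p i j * Real.log (a i * b j / c) =
      p i j * Real.log (a i) + p i j * Real.log (b j) - p i j * Real.log c :=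
    mul_log_mul_div_of_le (hp i j) (hpa i j) (hpb i j) ((hpa i j).trans (hac i))
  have hcol : ∑ i, ∑ j, p i j * Real.log (b j) = ∑ j, b j * Real.log (b j) := by
    rw [Finset.sum_comm]
    exact Finset.sum_congr rfl fun j _ => (Finset.sum_mul ..).symm
  simp only [Fintype.sum_prod_type, hlog, Finset.sum_sub_distrib, Finset.sum_add_distrib, hcol,
    ← Finset.sum_mul, ← hc_def] at gibbs
  simp only [Real.negMulLog, neg_mul, Finset.sum_neg_distrib] at gibbs ⊢
  linarith

lemma negMulLog_sum_le {p : ι → ℝ} (hp : ∀ i, 0 ≤ p i) :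
    Real.negMulLog (∑ i, p i) ≤ ∑ i, Real.negMulLog (p i) := by
  simp only [Real.negMulLog, neg_mul, Finset.sum_neg_distrib, neg_le_neg_iff, Finset.sum_mul]
  refine Finset.sum_le_sum fun i _ => ?_
  rcases (hp i).eq_or_lt with h | h
  · simp [← h]
  gcongr
  exact Finset.single_le_sum (fun i _ => hp i) (Finset.mem_univ i)

end Gibbs

section ShannonEntropy

variable {Ω ι κ ν : Type*} [MeasurableSpace Ω] {μ : Measure Ω} [Fintype ι] [Fintype κ] [Fintype ν]

/-- The Shannon entropy `H(ξ)` of the partition `ξ` of `Ω` into the fibres of `f : Ω → ι`.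
Finite measurable partitions are encoded by measurable maps to a finite discrete space; the join of
partitions is then the pairing of maps, and refinement is `Function.FactorsThrough`. -/
noncomputable def shannonEntropy (μ : Measure Ω) (f : Ω → ι) : ℝ :=
  ∑ i, Real.negMulLog (μ.real (f ⁻¹' {i}))

lemma shannonEntropy_nonneg [IsProbabilityMeasure μ] (f : Ω → ι) : 0 ≤ shannonEntropy μ f :=
  Finset.sum_nonneg fun _ _ => Real.negMulLog_nonneg measureReal_nonneg measureReal_le_one

section MeasurableSpace

variable [MeasurableSpace ι] [MeasurableSingletonClass ι] {f : Ω → ι}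

lemma sum_measureReal_inter_preimage_singleton [IsFiniteMeasure μ] (hf : Measurable f) (s : Set Ω) :
    ∑ i, μ.real (s ∩ f ⁻¹' {i}) = μ.real s := by
  have hfib (i : ι) : MeasurableSet (f ⁻¹' {i}) := hf (.singleton i)
  simp only [Set.inter_comm s, ← measureReal_restrict_apply (hfib _)]
  rw [sum_measureReal_preimage_singleton _ fun i _ => hfib i, Finset.coe_univ, Set.preimage_univ,
    measureReal_restrict_apply .univ, Set.univ_inter]

lemma sum_measureReal_preimage_singleton_eq_one [IsProbabilityMeasure μ] (hf : Measurable f) :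
    ∑ i, μ.real (f ⁻¹' {i}) = 1 := by
  simpa using sum_measureReal_inter_preimage_singleton (μ := μ) hf Set.univ

lemma shannonEntropy_le_log_card [IsProbabilityMeasure μ] (hf : Measurable f) :
    shannonEntropy μ f ≤ Real.log (Fintype.card ι) := by
  obtain ⟨x⟩ := μ.nonempty_of_neZero
  have : Nonempty ι := ⟨f x⟩
  have hcard : (0 : ℝ) < Fintype.card ι := by exact_mod_cast Fintype.card_pos
  have hsum := sum_measureReal_preimage_singleton_eq_one (μ := μ) hf
  have gibbs := sum_negMulLog_le_neg_sum_mul_log (p := fun i => μ.real (f ⁻¹' {i}))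
    (q := fun _ => (Fintype.card ι : ℝ)⁻¹) (fun _ => measureReal_nonneg) (fun _ => by positivity)
    (fun _ h => absurd h (by positivity)) (by simp [hsum, hcard.ne'])
  rwa [← Finset.sum_mul, hsum, one_mul, Real.log_inv, neg_neg] at gibbs

lemma neg_log_le_shannonEntropy [IsProbabilityMeasure μ] (hf : Measurable f) {c : ℝ}
    (hc : ∀ i, μ.real (f ⁻¹' {i}) ≤ c) : -Real.log c ≤ shannonEntropy μ f := by
  calc -Real.log c = ∑ i, μ.real (f ⁻¹' {i}) * -Real.log c := by
        rw [← Finset.sum_mul, sum_measureReal_preimage_singleton_eq_one hf, one_mul]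
    _ ≤ shannonEntropy μ f := Finset.sum_le_sum fun i _ => ?_
  rcases (measureReal_nonneg (μ := μ) (s := f ⁻¹' {i})).eq_or_lt with h | h
  · simp [← h]
  rw [Real.negMulLog, neg_mul, mul_neg, neg_le_neg_iff]
  gcongr
  exact hc i

lemma shannonEntropy_map {Ω' : Type*} [MeasurableSpace Ω'] {S : Ω' → Ω} {μ : Measure Ω'}
    (hS : Measurable S) (hf : Measurable f) :
    shannonEntropy (μ.map S) f = shannonEntropy μ (f ∘ S) := by
  simp only [shannonEntropy, map_measureReal_apply hS (hf (.singleton _)), Set.preimage_comp]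

lemma shannonEntropy_comp_le [IsFiniteMeasure μ] (hf : Measurable f) (u : ι → κ) :
    shannonEntropy μ (u ∘ f) ≤ shannonEntropy μ f := by
  classical
  have fibre_inter (j : κ) (i : ι) :
      μ.real (u ∘ f ⁻¹' {j} ∩ f ⁻¹' {i}) = if u i = j then μ.real (f ⁻¹' {i}) else 0 := by
    split_ifs with h
    · congr 1; ext x; aesop
    · convert measureReal_empty; ext x; aesop
  calc shannonEntropy μ (u ∘ f)
    _ = ∑ j, Real.negMulLog (∑ i, μ.real (u ∘ f ⁻¹' {j} ∩ f ⁻¹' {i})) := by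
      simp only [shannonEntropy, sum_measureReal_inter_preimage_singleton hf]
    _ ≤ ∑ j, ∑ i, Real.negMulLog (μ.real (u ∘ f ⁻¹' {j} ∩ f ⁻¹' {i})) :=
      Finset.sum_le_sum fun j _ => negMulLog_sum_le fun i => measureReal_nonneg
    _ = shannonEntropy μ f := by
      rw [Finset.sum_comm]
      simp only [fibre_inter, apply_ite Real.negMulLog, Real.negMulLog_zero, Finset.sum_ite_eq,
        Finset.mem_univ, if_true, shannonEntropy]

lemma shannonEntropy_le_of_factorsThrough [IsFiniteMeasure μ] (hf : Measurable f) {g : Ω → κ}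
    (h : g.FactorsThrough f) : shannonEntropy μ g ≤ shannonEntropy μ f := by
  rcases isEmpty_or_nonempty Ω with _ | ⟨⟨x⟩⟩
  · simp [shannonEntropy, Set.eq_empty_of_isEmpty]
  have : Nonempty κ := ⟨g x⟩
  obtain ⟨u, rfl⟩ := (Function.factorsThrough_iff g).1 h
  exact shannonEntropy_comp_le hf u

variable [MeasurableSpace κ] [MeasurableSingletonClass κ] {g : Ω → κ}

-- For each value `k` of `h`, the joint distribution of `f` and `g` on `{h = k}` is a matrix to
-- which the inequality between joint and marginal entropies applies.
lemma shannonEntropy_prodMk_prodMk_add_le [IsFiniteMeasure μ] {h : Ω → ν} (hf : Measurable f)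
    (hg : Measurable g) :
    shannonEntropy μ (fun x => (h x, f x, g x)) + shannonEntropy μ h ≤
      shannonEntropy μ (fun x => (h x, f x)) + shannonEntropy μ (fun x => (h x, g x)) := by
  let p (k : ν) (i : ι) (j : κ) : ℝ := μ.real (h ⁻¹' {k} ∩ f ⁻¹' {i} ∩ g ⁻¹' {j})
  have joint (k : ν) (i : ι) (j : κ) :
      μ.real ((fun x => (h x, f x, g x)) ⁻¹' {(k, i, j)}) = p k i j := by
    congr 1; ext x; simp [and_assoc]
  have marginal_hf (k : ν) (i : ι) :
      μ.real ((fun x => (h x, f x)) ⁻¹' {(k, i)}) = ∑ j, p k i j := by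
    rw [sum_measureReal_inter_preimage_singleton hg]
    congr 1; ext x; simp
  have marginal_hg (k : ν) (j : κ) :
      μ.real ((fun x => (h x, g x)) ⁻¹' {(k, j)}) = ∑ i, p k i j := by
    simp only [p, Set.inter_right_comm _ _ (g ⁻¹' {j})]
    rw [sum_measureReal_inter_preimage_singleton hf]
    congr 1; ext x; simp
  have marginal_h (k : ν) : μ.real (h ⁻¹' {k}) = ∑ i, ∑ j, p k i j := by
    simp only [p, sum_measureReal_inter_preimage_singleton hg,
      sum_measureReal_inter_preimage_singleton hf]
  simp only [shannonEntropy, Fintype.sum_prod_type, joint, marginal_h, marginal_hf, marginal_hg,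
    ← Finset.sum_add_distrib]
  exact Finset.sum_le_sum fun k _ => sum_negMulLog_add_le_of_marginals fun _ _ => measureReal_nonneg

lemma shannonEntropy_add_le_of_factorsThrough [IsFiniteMeasure μ] {ν' : Type*} [Fintype ν']
    [MeasurableSpace ν] [MeasurableSingletonClass ν] {h : Ω → ν} {h' : Ω → ν'} (hf : Measurable f)
    (hg : Measurable g) (hh : Measurable h) (hhf : h.FactorsThrough f) (hhg : h.FactorsThrough g)
    (hfg : h'.FactorsThrough fun x => (f x, g x)) :
    shannonEntropy μ h' + shannonEntropy μ h ≤ shannonEntropy μ f + shannonEntropy μ g := by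
  have joint : shannonEntropy μ h' ≤ shannonEntropy μ fun x => (h x, f x, g x) :=
    shannonEntropy_le_of_factorsThrough (hh.prodMk (hf.prodMk hg)) fun x y hxy =>
      hfg (congrArg Prod.snd hxy)
  have marginal_hf : shannonEntropy μ (fun x => (h x, f x)) ≤ shannonEntropy μ f :=
    shannonEntropy_le_of_factorsThrough hf fun x y hxy => Prod.ext (hhf hxy) hxy
  have marginal_hg : shannonEntropy μ (fun x => (h x, g x)) ≤ shannonEntropy μ g :=
    shannonEntropy_le_of_factorsThrough hg fun x y hxy => Prod.ext (hhg hxy) hxy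
  linarith [shannonEntropy_prodMk_prodMk_add_le (μ := μ) (h := h) hf hg]

lemma shannonEntropy_le_add_of_factorsThrough [IsProbabilityMeasure μ] {h : Ω → ν}
    (hf : Measurable f) (hg : Measurable g) (hfg : h.FactorsThrough fun x => (f x, g x)) :
    shannonEntropy μ h ≤ shannonEntropy μ f + shannonEntropy μ g := by
  have submod := shannonEntropy_add_le_of_factorsThrough (μ := μ) (h := fun _ => ()) hf hg
    measurable_const (fun _ _ _ => rfl) (fun _ _ _ => rfl) hfg
  linarith [shannonEntropy_nonneg (μ := μ) fun _ : Ω => ()]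

lemma shannonEntropy_finset_pi_le [IsProbabilityMeasure μ] {J : Type*} [DecidableEq J]
    {f : J → Ω → ι} (hf : ∀ j, Measurable (f j)) (s : Finset J) :
    shannonEntropy μ (fun x (j : {j // j ∈ s}) => f j x) ≤ ∑ j ∈ s, shannonEntropy μ (f j) := by
  have hpi (s : Finset J) : Measurable fun x (j : {j // j ∈ s}) => f j x :=
    measurable_pi_lambda _ fun j => hf j
  induction s using Finset.induction_on with
  | empty => simpa using shannonEntropy_le_log_card (μ := μ) (hpi ∅)
  | insert a s has ih =>
    rw [Finset.sum_insert has]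
    refine (shannonEntropy_le_add_of_factorsThrough (hf a) (hpi s) fun x y hxy => ?_).trans
      (add_le_add_right ih _)
    obtain ⟨ha, hs⟩ := Prod.ext_iff.1 hxy
    funext ⟨j, hj⟩
    rcases Finset.mem_insert.1 hj with rfl | hj
    exacts [ha, congrFun hs ⟨j, hj⟩]

lemma shannonEntropy_pi_le [IsProbabilityMeasure μ] {J : Type*} [Fintype J] [DecidableEq J]
    {f : J → Ω → ι} (hf : ∀ j, Measurable (f j)) :
    shannonEntropy μ (fun x j => f j x) ≤ ∑ j, shannonEntropy μ (f j) := by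
  have hpi : Measurable fun x (j : {j : J // j ∈ Finset.univ}) => f j x :=
    measurable_pi_lambda _ fun j => hf j
  refine (shannonEntropy_le_of_factorsThrough hpi fun x y hxy => ?_).trans
    (shannonEntropy_finset_pi_le hf Finset.univ)
  exact funext fun j => congrFun hxy ⟨j, Finset.mem_univ j⟩

end MeasurableSpace

lemma shannonEntropy_mem [IsProbabilityMeasure μ] {s : Set Ω} (hs : MeasurableSet s) :
    shannonEntropy μ (· ∈ s) = Real.binEntropy (μ.real s) := by
  have hmem : (· ∈ s) ⁻¹' {True} = s := by ext; simp
  have hnot_mem : (· ∈ s) ⁻¹' {False} = sᶜ := by ext; simp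
  rw [shannonEntropy, Fintype.univ_Prop, Finset.sum_pair (by simp), hmem, hnot_mem,
    probReal_compl_eq_one_sub hs, Real.binEntropy_eq_negMulLog_add_negMulLog_one_sub]

end ShannonEntropy

section AverageMeasure

variable {Ω J : Type*} [MeasurableSpace Ω] {s : Finset J}

/-- The average `(1 / #s) ∑_{j ∈ s} ν j` of finitely many measures, with value `0` for `s = ∅`.
Empirical measures of separated sets and Cesàro means of push-forwards are both of this form. -/
noncomputable def averageMeasure (s : Finset J) (ν : J → Measure Ω) : Measure Ω :=
  (s.card : ENNReal)⁻¹ • ∑ j ∈ s, ν j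

lemma isProbabilityMeasure_averageMeasure (hs : s.Nonempty) (ν : J → Measure Ω)
    [∀ j, IsProbabilityMeasure (ν j)] : IsProbabilityMeasure (averageMeasure s ν) := by
  have hcard : (s.card : ENNReal) ≠ 0 := by simpa using hs.ne_empty
  exact ⟨by simp [averageMeasure, ENNReal.inv_mul_cancel hcard]⟩

lemma averageMeasure_real (ν : J → Measure Ω) [∀ j, IsFiniteMeasure (ν j)] (t : Set Ω) :
    (averageMeasure s ν).real t = (s.card : ℝ)⁻¹ * ∑ j ∈ s, (ν j).real t := by
  simp only [averageMeasure, measureReal_def, Measure.smul_apply, Measure.finsetSum_apply,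
    smul_eq_mul, ENNReal.toReal_mul, ENNReal.toReal_inv, ENNReal.toReal_natCast]
  rw [ENNReal.toReal_sum fun j _ => measure_ne_top _ _]

lemma integral_averageMeasure {ν : J → Measure Ω} {f : Ω → ℝ}
    (hf : ∀ j ∈ s, Integrable f (ν j)) :
    ∫ x, f x ∂(averageMeasure s ν) = (s.card : ℝ)⁻¹ * ∑ j ∈ s, ∫ x, f x ∂(ν j) := by
  rw [averageMeasure, integral_smul_measure, integral_finsetSum_measure hf]
  simp only [ENNReal.toReal_inv, ENNReal.toReal_natCast, smul_eq_mul]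

lemma sum_shannonEntropy_le_card_mul {ι : Type*} [Fintype ι] (ν : J → Measure Ω)
    [∀ j, IsFiniteMeasure (ν j)] (f : Ω → ι) :
    ∑ j ∈ s, shannonEntropy (ν j) f ≤ s.card * shannonEntropy (averageMeasure s ν) f := by
  rcases s.eq_empty_or_nonempty with rfl | hs
  · simp
  have hcard : (0 : ℝ) < s.card := by exact_mod_cast hs.card_pos
  simp only [shannonEntropy]
  rw [Finset.sum_comm, Finset.mul_sum]
  refine Finset.sum_le_sum fun i _ => ?_
  have jensen := Real.concaveOn_negMulLog.le_map_sum (t := s) (w := fun _ => (s.card : ℝ)⁻¹)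
    (p := fun j => (ν j).real (f ⁻¹' {i})) (fun _ _ => by positivity) (by simp [hcard.ne'])
    fun _ _ => measureReal_nonneg
  simp only [smul_eq_mul, ← Finset.mul_sum] at jensen
  rwa [averageMeasure_real, ← inv_mul_le_iff₀ hcard]

end AverageMeasure

lemma le_sub_of_antitone_sub {a : ℕ → ℝ} (ha : Antitone fun n => a (n + 1) - a n) {c : ℝ}
    (hc : ∀ q : ℕ, q * c ≤ a q) (n : ℕ) : c ≤ a (n + 1) - a n := by
  by_contra! hlt
  have linear_bound (k : ℕ) : a (n + k) ≤ a n + k * (a (n + 1) - a n) := by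
    induction k with
    | zero => simp
    | succ k ih =>
      have := ha (Nat.le_add_right n k)
      push_cast
      simp only [← add_assoc] at this ⊢
      linarith
  obtain ⟨k, hk⟩ := exists_nat_gt ((a n - n * c) / (c - (a (n + 1) - a n)))
  rw [div_lt_iff₀ (by linarith)] at hk
  have := hc (n + k)
  push_cast at this
  linarith [linear_bound k]

section Itinerary

variable {Ω ι : Type*} {T : Ω → Ω} {f : Ω → ι} {F G : Finset ℕ}

/-- The itinerary of `x` at the times in `F`, as seen through `f`. If `ξ` is the partition into the
fibres of `f`, then the fibres of `itinerary T f F` are the atoms of `⋁_{i ∈ F} T^{-i} ξ`. -/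
def itinerary (T : Ω → Ω) (f : Ω → ι) (F : Finset ℕ) (x : Ω) : {i // i ∈ F} → ι :=
  fun i => f (T^[i] x)

lemma itinerary_eq_iff {x y : Ω} :
    itinerary T f F x = itinerary T f F y ↔ ∀ i ∈ F, f (T^[i] x) = f (T^[i] y) := by
  simp only [funext_iff, itinerary, Subtype.forall]

variable [MeasurableSpace Ω] [MeasurableSpace ι]

lemma measurable_itinerary (hT : Measurable T) (hf : Measurable f) (F : Finset ℕ) :
    Measurable (itinerary T f F) :=
  measurable_pi_lambda _ fun i => hf.comp (hT.iterate i)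

variable [Fintype ι] [MeasurableSingletonClass ι] {μ : Measure Ω}

lemma shannonEntropy_itinerary_mono [IsFiniteMeasure μ] (hT : Measurable T) (hf : Measurable f)
    (hFG : F ⊆ G) : shannonEntropy μ (itinerary T f F) ≤ shannonEntropy μ (itinerary T f G) :=
  shannonEntropy_le_of_factorsThrough (measurable_itinerary hT hf G) fun _ _ hxy =>
    itinerary_eq_iff.2 fun i hi => itinerary_eq_iff.1 hxy i (hFG hi)

lemma shannonEntropy_itinerary_union_add_inter_le [IsFiniteMeasure μ] (hT : Measurable T)
    (hf : Measurable f) (F G : Finset ℕ) :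
    shannonEntropy μ (itinerary T f (F ∪ G)) + shannonEntropy μ (itinerary T f (F ∩ G)) ≤
      shannonEntropy μ (itinerary T f F) + shannonEntropy μ (itinerary T f G) := by
  refine shannonEntropy_add_le_of_factorsThrough (measurable_itinerary hT hf F)
    (measurable_itinerary hT hf G) (measurable_itinerary hT hf (F ∩ G))
    (fun x y hxy => itinerary_eq_iff.2 fun i hi =>
      itinerary_eq_iff.1 hxy i (Finset.mem_of_mem_inter_left hi))
    (fun x y hxy => itinerary_eq_iff.2 fun i hi =>
      itinerary_eq_iff.1 hxy i (Finset.mem_of_mem_inter_right hi))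
    fun x y hxy => itinerary_eq_iff.2 fun i hi => ?_
  obtain ⟨hF, hG⟩ := Prod.ext_iff.1 hxy
  exact (Finset.mem_union.1 hi).elim (itinerary_eq_iff.1 hF i) (itinerary_eq_iff.1 hG i)

lemma shannonEntropy_itinerary_union_le [IsProbabilityMeasure μ] (hT : Measurable T)
    (hf : Measurable f) (F G : Finset ℕ) :
    shannonEntropy μ (itinerary T f (F ∪ G)) ≤
      shannonEntropy μ (itinerary T f F) + shannonEntropy μ (itinerary T f G) := by
  linarith [shannonEntropy_itinerary_union_add_inter_le (μ := μ) hT hf F G,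
    shannonEntropy_nonneg (μ := μ) (itinerary T f (F ∩ G))]

lemma shannonEntropy_itinerary_image_add [IsFiniteMeasure μ] (hT : Measurable T)
    (hf : Measurable f) (F : Finset ℕ) (p : ℕ) :
    shannonEntropy μ (itinerary T f (F.image (· + p))) =
      shannonEntropy (μ.map T^[p]) (itinerary T f F) := by
  have same_fibres {x y : Ω} : itinerary T f (F.image (· + p)) x =
      itinerary T f (F.image (· + p)) y ↔
        itinerary T f F (T^[p] x) = itinerary T f F (T^[p] y) := by
    simp only [itinerary_eq_iff, Finset.forall_mem_image, Function.iterate_add_apply]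
  rw [shannonEntropy_map (hT.iterate p) (measurable_itinerary hT hf F)]
  exact le_antisymm
    (shannonEntropy_le_of_factorsThrough ((measurable_itinerary hT hf F).comp (hT.iterate p))
      fun _ _ => same_fibres.2)
    (shannonEntropy_le_of_factorsThrough (measurable_itinerary hT hf _) fun _ _ => same_fibres.1)

lemma shannonEntropy_itinerary_le_card_mul [IsProbabilityMeasure μ] (hT : MeasurePreserving T μ μ)
    (hf : Measurable f) (F : Finset ℕ) :
    shannonEntropy μ (itinerary T f F) ≤ F.card * shannonEntropy μ f := by
  calc shannonEntropy μ (itinerary T f F)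
    _ ≤ ∑ i ∈ F, shannonEntropy μ (f ∘ T^[i]) :=
      shannonEntropy_finset_pi_le (fun i => hf.comp (hT.measurable.iterate i)) F
    _ = F.card * shannonEntropy μ f := by
      simp only [← shannonEntropy_map (hT.measurable.iterate _) hf, (hT.iterate _).map_eq,
        Finset.sum_const, nsmul_eq_mul]

lemma antitone_shannonEntropy_itinerary_range_sub [IsProbabilityMeasure μ]
    (hT : MeasurePreserving T μ μ) (hf : Measurable f) :
    Antitone fun n => shannonEntropy μ (itinerary T f (Finset.range (n + 1))) -
      shannonEntropy μ (itinerary T f (Finset.range n)) := by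
  refine antitone_nat_of_succ_le fun n => ?_
  have shift (n : ℕ) : shannonEntropy μ (itinerary T f (Finset.Ico 1 (n + 1))) =
      shannonEntropy μ (itinerary T f (Finset.range n)) := by
    have himage := Finset.image_add_right_Ico 0 n 1
    rw [← himage, ← Finset.range_eq_Ico, shannonEntropy_itinerary_image_add hT.measurable hf,
      (hT.iterate 1).map_eq]
  have submod := shannonEntropy_itinerary_union_add_inter_le (μ := μ) hT.measurable hf
    (Finset.range (n + 1)) (Finset.Ico 1 (n + 2))
  have hunion : Finset.range (n + 1) ∪ Finset.Ico 1 (n + 2) = Finset.range (n + 2) := by grind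
  have hinter : Finset.range (n + 1) ∩ Finset.Ico 1 (n + 2) = Finset.Ico 1 (n + 1) := by grind
  rw [hunion, hinter, shift, shift] at submod
  linarith

lemma card_mul_le_shannonEntropy_itinerary [IsProbabilityMeasure μ] (hT : MeasurePreserving T μ μ)
    (hf : Measurable f) {c : ℝ}
    (hc : ∀ q : ℕ, q * c ≤ shannonEntropy μ (itinerary T f (Finset.range q))) (F : Finset ℕ) :
    F.card * c ≤ shannonEntropy μ (itinerary T f F) := by
  induction F using Finset.induction_on_max with
  | empty => simpa using shannonEntropy_nonneg (μ := μ) (itinerary T f ∅)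
  | insert s F hF ih =>
    have increment := le_sub_of_antitone_sub
      (antitone_shannonEntropy_itinerary_range_sub hT hf) hc s
    have submod := shannonEntropy_itinerary_union_add_inter_le (μ := μ) hT.measurable hf
      (insert s F) (Finset.range s)
    have hunion : insert s F ∪ Finset.range s = Finset.range (s + 1) := by grind
    have hinter : insert s F ∩ Finset.range s = F := by grind
    rw [hunion, hinter] at submod
    rw [Finset.card_insert_of_notMem fun hs => (hF s hs).false]
    push_cast
    linarith

end Itinerary

section Spanning

variable {T : X → X} {F : Finset ℕ} {ε : ℝ}

/-- The closed Bowen relation: `x` and `y` are related if their orbits stay within `ε` of each other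
at all times in `F`. Its covers and separated sets are the `(F, ε)`-spanning and the
`(F, ε)`-separated sets. -/
def bowenRel (T : X → X) (F : Finset ℕ) (ε : ℝ) : SetRel X X :=
  {p | ∀ i ∈ F, dist (T^[i] p.1) (T^[i] p.2) ≤ ε}

lemma bowenRel_of_itinerary_eq {ι : Type*} {f : X → ι} (hf : ∀ x y, f x = f y → dist x y ≤ ε)
    {x y : X} (hxy : itinerary T f F x = itinerary T f F y) : (x, y) ∈ bowenRel T F ε :=
  fun i hi => hf _ _ (itinerary_eq_iff.1 hxy i hi)

lemma exists_finset_map_dist_le_of_eq [CompactSpace X] (hε : 0 < ε) :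
    ∃ (t : Finset X) (f : X → t), ∀ x y, f x = f y → dist x y ≤ ε := by
  obtain ⟨t, -, ht, hcover⟩ := finite_cover_balls_of_compact (isCompact_univ (X := X))
    (half_pos hε)
  lift t to Finset X using ht
  have hnear (x : X) : ∃ z : t, dist x z < ε / 2 := by
    simpa using hcover (Set.mem_univ x)
  choose f hf using hnear
  refine ⟨t, f, fun x y hxy => ?_⟩
  calc dist x y ≤ dist x (f x) + dist y (f x) := dist_triangle_right _ _ _
    _ ≤ ε := by linarith [hf x, hxy ▸ hf y]

lemma exists_isSeparated_isCover_bowenRel [CompactSpace X] (T : X → X) (F : Finset ℕ)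
    (hε : 0 < ε) : ∃ E : Finset X, (bowenRel T F ε).IsSeparated (E : Set X) ∧
      (bowenRel T F ε).IsCover Set.univ (E : Set X) := by
  have : (bowenRel T F ε).IsRefl := ⟨fun x i _ => by simpa using hε.le⟩
  have : (bowenRel T F ε).IsSymm := ⟨fun x y h i hi => dist_comm (T^[i] x) _ ▸ h i hi⟩
  obtain ⟨t, f, hf⟩ := exists_finset_map_dist_le_of_eq (X := X) hε
  have finite_of_isSeparated (E : Set X) (hE : (bowenRel T F ε).IsSeparated E) : E.Finite :=
    Set.Finite.of_injOn (Set.mapsTo_univ (itinerary T f F) E)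
      (fun x hx y hy hxy => hE.eq hx hy (not_not.2 (bowenRel_of_itinerary_eq hf hxy)))
      Set.finite_univ
  obtain ⟨E, hE⟩ := zorn_subset {E : Set X | (bowenRel T F ε).IsSeparated E} fun c hc hchain =>
    ⟨⋃₀ c, (Set.pairwise_sUnion hchain.directedOn).2 hc, fun _ => Set.subset_sUnion_of_mem⟩
  lift E to Finset X using finite_of_isSeparated E hE.prop
  refine ⟨E, hE.prop, .of_maximal_isSeparated ?_⟩
  simpa only [Set.subset_univ, true_and, Set.mem_ofPred_eq] using hE

lemma spaN_le_card_of_isCover {E : Finset X} (hE : (bowenRel T F ε).IsCover Set.univ (E : Set X)) :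
    spaN T F ε ≤ E.card :=
  Nat.sInf_le ⟨E, rfl, fun x => hE (Set.mem_univ x)⟩

lemma exists_isCover_card_eq_spaN [CompactSpace X] (T : X → X) (F : Finset ℕ) (hε : 0 < ε) :
    ∃ E : Finset X, E.card = spaN T F ε ∧ (bowenRel T F ε).IsCover Set.univ (E : Set X) := by
  obtain ⟨E, -, hE⟩ := exists_isSeparated_isCover_bowenRel T F hε
  obtain ⟨E', hcard, hE'⟩ := Nat.sInf_mem (s := {k : ℕ | ∃ E : Finset X, E.card = k ∧
    ∀ x : X, ∃ e ∈ E, ∀ i ∈ F, dist (T^[i] x) (T^[i] e) ≤ ε})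
    ⟨E.card, E, rfl, fun x => hE (Set.mem_univ x)⟩
  exact ⟨E', hcard, fun x _ => hE' x⟩

lemma spaN_pos [CompactSpace X] [Nonempty X] (T : X → X) (F : Finset ℕ) (hε : 0 < ε) :
    0 < spaN T F ε := by
  obtain ⟨E, hcard, hE⟩ := exists_isCover_card_eq_spaN T F hε
  simpa [← hcard, Finset.card_pos] using hE.nonempty Set.univ_nonempty

lemma spaN_le_card_of_code {α : Type*} [Fintype α] {Φ : X → α}
    (hΦ : ∀ x y, Φ x = Φ y → (x, y) ∈ bowenRel T F ε) : spaN T F ε ≤ Fintype.card α := by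
  classical
  let E : Finset X := Finset.univ.image (Set.rangeSplitting Φ)
  have hE : (bowenRel T F ε).IsCover Set.univ (E : Set X) := fun x _ =>
    ⟨Set.rangeSplitting Φ ⟨Φ x, x, rfl⟩, by simp [E],
      hΦ _ _ (Set.apply_rangeSplitting Φ ⟨Φ x, x, rfl⟩).symm⟩
  calc spaN T F ε ≤ E.card := spaN_le_card_of_isCover hE
    _ ≤ Fintype.card (Set.range Φ) := Finset.card_image_le
    _ ≤ Fintype.card α := Fintype.card_subtype_le _

section Blocks

open Pointwise

-- A point is named, up to `2 * ε` along `F`, by the spanning points of its iterates `T^[p] x`.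
lemma spaN_two_mul_le_pow [CompactSpace X] (T : X → X) {P G : Finset ℕ} (hF : F ⊆ P + G)
    (hε : 0 < ε) : spaN T F (2 * ε) ≤ spaN T G ε ^ P.card := by
  obtain ⟨E, hcard, hE⟩ := exists_isCover_card_eq_spaN T G hε
  choose e he hnear using fun x => hE (Set.mem_univ x)
  let nearest : X → E := fun x => ⟨e x, he x⟩
  calc spaN T F (2 * ε) ≤ Fintype.card ({p // p ∈ P} → E) :=
        spaN_le_card_of_code (Φ := itinerary T nearest P) fun x y hxy i hi => ?_
    _ = spaN T G ε ^ P.card := by simp [hcard]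
  obtain ⟨p, hp, g, hg, rfl⟩ := Finset.mem_add.1 (hF hi)
  have same_name : e (T^[p] x) = e (T^[p] y) :=
    congrArg Subtype.val (itinerary_eq_iff.1 hxy p hp)
  have hx := hnear (T^[p] x) g hg
  have hy := hnear (T^[p] y) g hg
  simp only [← same_name, ← Function.iterate_add_apply, add_comm g p] at hx hy
  linarith [dist_triangle_right (T^[p + g] x) (T^[p + g] y) (T^[g] (e (T^[p] x)))]

lemma log_spaN_two_mul_le [CompactSpace X] [Nonempty X] (T : X → X) {P G : Finset ℕ}
    (hF : F ⊆ P + G) (hε : 0 < ε) :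
    Real.log (spaN T F (2 * ε)) ≤ P.card * Real.log (spaN T G ε) := by
  have hpos : (0 : ℝ) < spaN T F (2 * ε) := by exact_mod_cast spaN_pos T F (by positivity)
  rw [← Real.log_pow]
  exact Real.log_le_log hpos (by exact_mod_cast spaN_two_mul_le_pow T hF hε)

-- `P` consists of the left end points of the intervals of length `m` whose right end points run
-- through a sparsest residue class modulo `m` of `F + {0, …, m - 1}`.
lemma exists_subset_add_range_card_mul_le (F : Finset ℕ) {m : ℕ} (hm : 0 < m) :
    ∃ P : Finset ℕ, F ⊆ P + Finset.range m ∧ P.card * m ≤ (F + Finset.range m).card := by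
  set S := F + Finset.range m
  obtain ⟨r, hr, hcard⟩ : ∃ r ∈ Finset.range m, (S.filter (· % m = r)).card * m ≤ S.card := by
    by_contra! hlt
    have hsum := Finset.sum_lt_sum_of_nonempty (Finset.nonempty_range_iff.2 hm.ne') hlt
    rw [← Finset.sum_mul, ← Finset.card_eq_sum_card_fiberwise fun p _ =>
      Finset.mem_coe.2 (Finset.mem_range.2 (Nat.mod_lt p hm))] at hsum
    simp [mul_comm] at hsum
  rw [Finset.mem_range] at hr
  refine ⟨(S.filter (· % m = r)).image (· + 1 - m), fun i hi => ?_,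
    (Nat.mul_le_mul_right m Finset.card_image_le).trans hcard⟩
  obtain ⟨j, hj, hjr⟩ : ∃ j < m, (i + j) % m = r := by
    refine ⟨(r + (m - i % m)) % m, Nat.mod_lt _ hm, ?_⟩
    have := Nat.mod_lt i hm
    rw [Nat.add_mod_mod, ← Nat.mod_add_mod, show i % m + (r + (m - i % m)) = r + m by omega,
      Nat.add_mod_right, Nat.mod_eq_of_lt hr]
  have hmem : i + j ∈ S.filter (· % m = r) :=
    Finset.mem_filter.2 ⟨Finset.add_mem_add hi (Finset.mem_range.2 hj), hjr⟩
  exact Finset.mem_add.2 ⟨i + j + 1 - m, Finset.mem_image_of_mem _ hmem, i - (i + j + 1 - m),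
    Finset.mem_range.2 (by omega), by omega⟩

lemma log_spaN_two_mul_le_card_add_range_mul [CompactSpace X] [Nonempty X] (T : X → X)
    (F : Finset ℕ) (hε : 0 < ε) {m : ℕ} (hm : 0 < m) :
    Real.log (spaN T F (2 * ε)) ≤
      (F + Finset.range m).card * (Real.log (spaN T (Finset.range m) ε) / m) := by
  obtain ⟨P, hF, hcard⟩ := exists_subset_add_range_card_mul_le F hm
  have hm' : (0 : ℝ) < m := by exact_mod_cast hm
  have : 0 ≤ Real.log (spaN T (Finset.range m) ε) / m :=
    div_nonneg (Real.log_natCast_nonneg _) hm'.le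
  calc Real.log (spaN T F (2 * ε))
    _ ≤ P.card * Real.log (spaN T (Finset.range m) ε) := log_spaN_two_mul_le T hF hε
    _ = (P.card * m : ℕ) * (Real.log (spaN T (Finset.range m) ε) / m) := by
      push_cast; field_simp
    _ ≤ (F + Finset.range m).card * (Real.log (spaN T (Finset.range m) ε) / m) := by gcongr

end Blocks
end Spanning

section Goodwyn

open scoped Topology

variable {ι : Type*}

lemma exists_measurable_forall_mem {Ω α : Type*} [MeasurableSpace Ω] [MeasurableSpace α]
    [Countable α] {B : α → Set Ω} (hB : ∀ i, MeasurableSet (B i)) (hcover : ⋃ i, B i = Set.univ) :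
    ∃ c : Ω → α, Measurable c ∧ ∀ x, x ∈ B (c x) := by
  classical
  rw [Set.iUnion_eq_univ_iff] at hcover
  rcases isEmpty_or_nonempty Ω with _ | ⟨⟨x⟩⟩
  · exact ⟨isEmptyElim, Measurable.of_discrete, isEmptyElim⟩
  have : Nonempty α := ⟨(hcover x).choose⟩
  obtain ⟨u, hu⟩ := exists_surjective_nat α
  have covered (x : Ω) : ∃ n, x ∈ B (u n) := by
    obtain ⟨i, hi⟩ := hcover x
    obtain ⟨n, rfl⟩ := hu i
    exact ⟨n, hi⟩
  exact ⟨fun x => u (Nat.find (covered x)),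
    Measurable.of_discrete.comp (measurable_find covered fun n => hB (u n)),
    fun x => Nat.find_spec (covered x)⟩

lemma exists_pos_forall_dist_lt_imp_eq [CompactSpace X] [Finite ι] {K : ι → Set X}
    (hK : ∀ i, IsClosed (K i)) (hdisj : Pairwise (Function.onFun Disjoint K)) :
    ∃ δ > 0, ∀ i j, ∀ x ∈ K i, ∀ y ∈ K j, dist x y < δ → i = j := by
  have uniform_gap : ∀ᶠ δ in 𝓝[>] (0 : ℝ), ∀ i j, ∀ x ∈ K i, ∀ y ∈ K j, dist x y < δ → i = j := by
    refine eventually_all.2 fun i => eventually_all.2 fun j => ?_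
    rcases eq_or_ne i j with rfl | hij
    · simp
    obtain ⟨δ, hδ, hthick⟩ := (hdisj hij).exists_thickenings (hK i).isCompact (hK j)
    filter_upwards [Ioo_mem_nhdsGT hδ] with δ' hδ' x hx y hy hxy
    refine absurd (Metric.self_subset_thickening hδ _ hx) fun hx => ?_
    exact Set.disjoint_left.1 hthick hx
      (Metric.mem_thickening_iff.2 ⟨y, hy, hxy.trans hδ'.2⟩)
  obtain ⟨δ, hgap, hδ⟩ := (uniform_gap.and self_mem_nhdsWithin).exists
  exact ⟨δ, hδ, hgap⟩

variable [MeasurableSpace ι] [MeasurableSingletonClass ι]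

-- Lusin: off a set of small measure, `f` is continuous and hence uniformly locally constant.
lemma exists_exceptional_sets [MeasurableSpace X] [BorelSpace X] [CompactSpace X] [Finite ι]
    (μ : Measure X) [IsFiniteMeasure μ] {f : X → ι} (hf : Measurable f) {τ : ℝ} (hτ : 0 < τ) :
    ∃ δ > 0, ∃ U : ι → Set X, (∀ i, MeasurableSet (U i)) ∧ (∀ i, μ.real (U i) < τ) ∧
      ∀ x y, dist x y < δ → (∀ i, x ∈ U i ↔ y ∈ U i) → f x = f y := by
  have hfib (i : ι) : MeasurableSet (f ⁻¹' {i}) := hf (.singleton i)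
  choose K hKf hK hμK using fun i => (hfib i).exists_isClosed_sdiff_lt (measure_ne_top μ _)
    (ENNReal.ofReal_pos.2 hτ).ne'
  obtain ⟨δ, hδ, hgap⟩ := exists_pos_forall_dist_lt_imp_eq hK fun i j hij =>
    (Disjoint.preimage f (Set.disjoint_singleton.2 hij)).mono (hKf i) (hKf j)
  refine ⟨δ, hδ, fun i => f ⁻¹' {i} \ K i, fun i => (hfib i).diff (hK i).measurableSet,
    fun i => ENNReal.toReal_lt_of_lt_ofReal (hμK i), fun x y hxy hU => ?_⟩
  by_cases hx : x ∈ K (f x)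
  · by_cases hy : y ∈ K (f y)
    · exact hgap _ _ x hx y hy hxy
    · exact ((hU (f y)).2 ⟨rfl, hy⟩).1
  · exact ((hU (f x)).1 ⟨rfl, hx⟩).1.symm

variable [Fintype ι]

lemma exists_indicators_shannonEntropy_le [MeasurableSpace X] [BorelSpace X] [CompactSpace X]
    [DecidableEq ι] (μ : Measure X) [IsProbabilityMeasure μ] {f : X → ι} (hf : Measurable f)
    {η : ℝ} (hη : 0 < η) :
    ∃ δ > 0, ∃ ζ : X → ι → Prop, Measurable ζ ∧ shannonEntropy μ ζ ≤ η ∧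
      ∀ x y, dist x y < δ → ζ x = ζ y → f x = f y := by
  have hη' : 0 < η / (Fintype.card ι + 1) := by positivity
  obtain ⟨τ, hτ, hbin⟩ : ∃ τ > 0, ∀ p, 0 ≤ p → p < τ →
      Real.binEntropy p < η / (Fintype.card ι + 1) := by
    have hev := (Real.binEntropy_continuous.tendsto 0).eventually_lt_const (by simpa using hη')
    obtain ⟨τ, hτ, hball⟩ := Metric.eventually_nhds_iff.1 hev
    exact ⟨τ, hτ, fun p hp hpτ => hball (by simpa [abs_of_nonneg hp] using hpτ)⟩
  obtain ⟨δ, hδ, U, hU, hμU, hfU⟩ := exists_exceptional_sets μ hf hτ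
  refine ⟨δ, hδ, fun x i => x ∈ U i, measurable_pi_lambda _ fun i => measurable_mem.2 (hU i), ?_,
    fun x y hxy hζ => hfU x y hxy fun i => (congrFun hζ i).to_iff⟩
  calc shannonEntropy μ (fun x i => x ∈ U i)
    _ ≤ ∑ i, shannonEntropy μ (· ∈ U i) :=
      shannonEntropy_pi_le fun i => measurable_mem.2 (hU i)
    _ = ∑ i, Real.binEntropy (μ.real (U i)) := by simp only [shannonEntropy_mem (hU _)]
    _ ≤ Fintype.card ι • (η / (Fintype.card ι + 1)) :=
      Finset.sum_le_card_nsmul _ _ _ fun i _ => (hbin _ measureReal_nonneg (hμU i)).le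
    _ ≤ η := by
      rw [nsmul_eq_mul, mul_div_assoc', div_le_iff₀ (by positivity)]
      linarith

lemma measurableSet_bowenRel_left [MeasurableSpace X] [OpensMeasurableSpace X] {T : X → X}
    (hT : Measurable T) (F : Finset ℕ) (e : X) (ε : ℝ) :
    MeasurableSet {x | (x, e) ∈ bowenRel T F ε} := by
  have hball : {x | (x, e) ∈ bowenRel T F ε} =
      ⋂ i ∈ F, T^[i] ⁻¹' Metric.closedBall (T^[i] e) ε := by
    ext; simp [bowenRel]
  rw [hball]
  exact F.measurableSet_biInter fun i _ => hT.iterate i measurableSet_closedBall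

lemma exists_pos_shannonEntropy_itinerary_le [MeasurableSpace X] [BorelSpace X] [CompactSpace X]
    {T : X → X} {μ : Measure X} [IsProbabilityMeasure μ] (hT : MeasurePreserving T μ μ)
    {f : X → ι} (hf : Measurable f) {η : ℝ} (hη : 0 < η) :
    ∃ ε > 0, ∀ F : Finset ℕ,
      shannonEntropy μ (itinerary T f F) ≤ Real.log (spaN T F ε) + F.card * η := by
  classical
  obtain ⟨δ, hδ, ζ, hζ, hHζ, hfζ⟩ := exists_indicators_shannonEntropy_le μ hf hη
  refine ⟨δ / 3, by positivity, fun F => ?_⟩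
  obtain ⟨E, hcard, hE⟩ := exists_isCover_card_eq_spaN T F (by positivity : 0 < δ / 3)
  obtain ⟨c, hc, hnear⟩ := exists_measurable_forall_mem
    (fun e : E => measurableSet_bowenRel_left hT.measurable F (e : X) (δ / 3))
    (Set.iUnion_eq_univ_iff.2 fun x => by simpa using hE (Set.mem_univ x))
  have determined : (itinerary T f F).FactorsThrough fun x => (c x, itinerary T ζ F x) := by
    intro x y hxy
    obtain ⟨hcxy, hζxy⟩ := Prod.ext_iff.1 hxy
    refine itinerary_eq_iff.2 fun i hi => hfζ _ _ ?_ (itinerary_eq_iff.1 hζxy i hi)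
    have hx : dist (T^[i] x) (T^[i] (c x)) ≤ δ / 3 := hnear x i hi
    have hy : dist (T^[i] y) (T^[i] (c y)) ≤ δ / 3 := hnear y i hi
    rw [← show c x = c y from hcxy] at hy
    linarith [dist_triangle_right (T^[i] x) (T^[i] y) (T^[i] (c x))]
  calc shannonEntropy μ (itinerary T f F)
    _ ≤ shannonEntropy μ c + shannonEntropy μ (itinerary T ζ F) :=
      shannonEntropy_le_add_of_factorsThrough hc (measurable_itinerary hT.measurable hζ F)
        determined
    _ ≤ Real.log (spaN T F (δ / 3)) + F.card * η := by
      gcongr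
      · simpa [hcard] using shannonEntropy_le_log_card (μ := μ) hc
      · exact (shannonEntropy_itinerary_le_card_mul hT hζ F).trans (by gcongr)

lemma exists_measurable_preimage_singleton_eq {Y : Type*} [MeasurableSpace Y] {k : ℕ}
    {ξ : Fin k → Set Y} (hξ : IsMeasPartition ξ) :
    ∃ f : Y → Fin k, Measurable f ∧ ∀ j, f ⁻¹' {j} = ξ j := by
  obtain ⟨hmeas, hdisj, hcover⟩ := hξ
  obtain ⟨f, hf, hfξ⟩ := exists_measurable_forall_mem hmeas hcover
  refine ⟨f, hf, fun j => Set.ext fun x => ⟨fun hx => hx ▸ hfξ x, fun hx => ?_⟩⟩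
  exact hdisj.eq (Set.not_disjoint_iff.2 ⟨x, hfξ x, hx⟩)

lemma Hjoin_eq_shannonEntropy_itinerary {Y : Type*} [MeasurableSpace Y] (μ : Measure Y)
    (T : Y → Y) {k : ℕ} {ξ : Fin k → Set Y} {f : Y → Fin k} (hfξ : ∀ j, f ⁻¹' {j} = ξ j)
    (F : Finset ℕ) : Hjoin μ T F ξ = shannonEntropy μ (itinerary T f F) := by
  refine Finset.sum_congr rfl fun g _ => ?_
  have atom_eq : ⋂ i : {i // i ∈ F}, T^[(i : ℕ)] ⁻¹' ξ (g i) = itinerary T f F ⁻¹' {g} := by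
    ext x
    simp [itinerary, funext_iff, ← hfξ]
  rw [atom_eq, measureReal_def]

lemma card_image_Icc_one_le (A : ℕ → ℕ) (n : ℕ) : ((Finset.Icc 1 n).image A).card ≤ n :=
  Finset.card_image_le.trans (by simp)

lemma seqEntMeas_le_seqEntTop [MeasurableSpace X] [BorelSpace X] [CompactSpace X] {T : X → X}
    {μ : Measure X} [IsProbabilityMeasure μ] (hT : MeasurePreserving T μ μ) (A : ℕ → ℕ) :
    seqEntMeas μ T A ≤ seqEntTop T A := by
  refine iSup_le fun k => iSup₂_le fun ξ hξ => ?_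
  obtain ⟨f, hf, hfξ⟩ := exists_measurable_preimage_singleton_eq hξ
  simp only [Hjoin_eq_shannonEntropy_itinerary μ T hfξ]
  refine EReal.le_of_forall_lt_iff_le.1 fun z hz => ?_
  obtain ⟨y, hy, hyz⟩ := EReal.lt_iff_exists_real_btwn.1 hz
  rw [EReal.coe_lt_coe_iff] at hyz
  obtain ⟨ε, hε, entropy_le⟩ := exists_pos_shannonEntropy_itinerary_le hT hf (sub_pos.2 hyz)
  have hlim : limsup (fun n : ℕ =>
      ((Real.log (spaN T ((Finset.Icc 1 n).image A) ε) / n : ℝ) : EReal)) atTop < y :=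
    (le_iSup₂_of_le ε hε le_rfl).trans_lt hy
  refine limsup_le_of_le (h := ?_)
  filter_upwards [eventually_lt_of_limsup_lt hlim, eventually_gt_atTop 0] with n hn hn0
  have hn0' : (0 : ℝ) < n := by exact_mod_cast hn0
  rw [EReal.coe_lt_coe_iff, div_lt_iff₀ hn0'] at hn
  rw [EReal.coe_le_coe_iff, div_le_iff₀ hn0']
  calc shannonEntropy μ (itinerary T f ((Finset.Icc 1 n).image A))
    _ ≤ Real.log (spaN T ((Finset.Icc 1 n).image A) ε) +
        ((Finset.Icc 1 n).image A).card * (z - y) := entropy_le _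
    _ ≤ y * n + n * (z - y) := by
      have := card_image_Icc_one_le A n
      have := sub_nonneg.2 hyz.le
      gcongr
    _ = z * n := by ring

end Goodwyn

section MeasureLowerBound

open Pointwise

variable {Ω ι : Type*} [MeasurableSpace Ω] [MeasurableSpace ι] [Fintype ι]
  [MeasurableSingletonClass ι] {T : Ω → Ω} {f : Ω → ι} {μ : Measure Ω}

lemma isMeasPartition_preimage_singleton {k : ℕ} {g : Ω → Fin k} (hg : Measurable g) :
    IsMeasPartition fun j => g ⁻¹' {j} :=
  ⟨fun j => hg (.singleton j), fun _ _ hij => Disjoint.preimage g (Set.disjoint_singleton.2 hij),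
    Set.iUnion_eq_univ_iff.2 fun x => ⟨g x, rfl⟩⟩

lemma limsup_shannonEntropy_itinerary_le_seqEntMeas [IsFiniteMeasure μ] (hT : Measurable T)
    (hf : Measurable f) (A : ℕ → ℕ) :
    limsup (fun n : ℕ =>
      ((shannonEntropy μ (itinerary T f ((Finset.Icc 1 n).image A)) / n : ℝ) : EReal)) atTop ≤
        seqEntMeas μ T A := by
  let e := Fintype.equivFin ι
  have hg : Measurable (e ∘ f) := Measurable.of_discrete.comp hf
  refine le_trans (limsup_le_limsup (.of_forall fun n => ?_)) (le_iSup_of_le (Fintype.card ι)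
    (le_iSup₂_of_le _ (isMeasPartition_preimage_singleton hg) le_rfl))
  rw [Hjoin_eq_shannonEntropy_itinerary μ T fun j => rfl, EReal.coe_le_coe_iff]
  gcongr
  refine shannonEntropy_le_of_factorsThrough (measurable_itinerary hT hg _) fun x y hxy => ?_
  exact itinerary_eq_iff.2 fun i hi => e.injective (itinerary_eq_iff.1 hxy i hi)

lemma shannonEntropy_itinerary_add_le [IsFiniteMeasure μ] (hT : Measurable T) (hf : Measurable f)
    (F G : Finset ℕ) : shannonEntropy μ (itinerary T f (F + G)) ≤
      shannonEntropy μ (itinerary T (itinerary T f G) F) := by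
  refine shannonEntropy_le_of_factorsThrough
    (measurable_itinerary hT (measurable_itinerary hT hf G) F) fun x y hxy => ?_
  simp only [itinerary_eq_iff, ← Function.iterate_add_apply] at hxy ⊢
  intro i hi
  obtain ⟨a, ha, b, hb, rfl⟩ := Finset.mem_add.1 hi
  exact add_comm a b ▸ hxy a ha b hb

lemma limsup_card_div_mul_le_seqEntMeas [IsProbabilityMeasure μ] (hT : MeasurePreserving T μ μ)
    (hf : Measurable f) {c : ℝ}
    (hc : ∀ q : ℕ, q * c ≤ shannonEntropy μ (itinerary T f (Finset.range q)))
    (A : ℕ → ℕ) (m : ℕ) :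
    limsup (fun n : ℕ =>
      ((((Finset.Icc 1 n).image A + Finset.range m).card / n * c : ℝ) : EReal)) atTop ≤
        seqEntMeas μ T A := by
  refine le_trans (limsup_le_limsup (.of_forall fun n => ?_))
    (limsup_shannonEntropy_itinerary_le_seqEntMeas hT.measurable
      (measurable_itinerary hT.measurable hf (Finset.range m)) A)
  rw [EReal.coe_le_coe_iff, div_mul_eq_mul_div]
  gcongr
  exact (card_mul_le_shannonEntropy_itinerary hT hf hc _).trans
    (shannonEntropy_itinerary_add_le hT.measurable hf _ _)

end MeasureLowerBound

section WeakConvergence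

open scoped Topology

variable {Ω ι : Type*} [TopologicalSpace Ω]

lemma eventually_mem_iff_of_notMem_frontier {s : Set Ω} {x : Ω} (hx : x ∉ frontier s) :
    ∀ᶠ y in 𝓝 x, y ∈ s ↔ x ∈ s := by
  rw [← Set.mem_compl_iff, compl_frontier_eq_union_interior] at hx
  rcases hx with hx | hx <;> have hxs := interior_subset hx <;>
    filter_upwards [mem_interior_iff_mem_nhds.1 hx] with y hy
  · exact iff_of_true hy hxs
  · exact iff_of_false hy hxs

variable [MeasurableSpace Ω] {T : Ω → Ω} {f : Ω → ι}

lemma measure_frontier_preimage_singleton_eq_zero {μ : Measure Ω}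
    (hf : ∀ᵐ x ∂μ, ∀ᶠ y in 𝓝 x, f y = f x) (i : ι) : μ (frontier (f ⁻¹' {i})) = 0 := by
  refine measure_mono_null ?_ (ae_iff.1 hf)
  intro x hx hconst
  rw [frontier_eq_closure_inter_closure] at hx
  by_cases hi : f x = i
  · refine mem_closure_iff_frequently.1 hx.2 ?_
    filter_upwards [hconst] with y hy hyi
    exact hyi (hy.trans hi)
  · refine mem_closure_iff_frequently.1 hx.1 ?_
    filter_upwards [hconst] with y hy hyi
    exact hi (hy.symm.trans hyi)

lemma ae_eventually_itinerary_eq {μ : Measure Ω} (hTc : Continuous T)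
    (hT : MeasurePreserving T μ μ) (hf : ∀ᵐ x ∂μ, ∀ᶠ y in 𝓝 x, f y = f x) (F : Finset ℕ) :
    ∀ᵐ x ∂μ, ∀ᶠ y in 𝓝 x, itinerary T f F y = itinerary T f F x := by
  have along_orbit : ∀ᵐ x ∂μ, ∀ i : {i // i ∈ F}, ∀ᶠ y in 𝓝 (T^[i] x), f y = f (T^[i] x) :=
    ae_all_iff.2 fun i => (hT.iterate i).quasiMeasurePreserving.ae hf
  filter_upwards [along_orbit] with x hx
  filter_upwards [eventually_all.2 fun i : {i // i ∈ F} =>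
    ((hTc.iterate i).tendsto x).eventually (hx i)] with y hy
  exact funext hy

variable {J : Type*} {l : Filter J} [HasOuterApproxClosed Ω] [BorelSpace Ω]
  {ν : J → ProbabilityMeasure Ω} {μ : ProbabilityMeasure Ω}

lemma tendsto_shannonEntropy [Fintype ι] (hν : Tendsto ν l (𝓝 μ))
    (hf : ∀ᵐ x ∂(μ : Measure Ω), ∀ᶠ y in 𝓝 x, f y = f x) :
    Tendsto (fun j => shannonEntropy (ν j : Measure Ω) f) l
      (𝓝 (shannonEntropy (μ : Measure Ω) f)) := by
  refine tendsto_finsetSum _ fun i _ => (Real.continuous_negMulLog.tendsto _).comp ?_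
  have hfib := ProbabilityMeasure.tendsto_measure_of_null_frontier_of_tendsto' hν
    (measure_frontier_preimage_singleton_eq_zero hf i)
  exact (ENNReal.tendsto_toReal (measure_ne_top _ _)).comp hfib

lemma measurePreserving_of_tendsto_of_asymptotically_invariant [l.NeBot] (hT : Continuous T)
    (hν : Tendsto ν l (𝓝 μ))
    (hinv : ∀ g : BoundedContinuousFunction Ω ℝ,
      Tendsto (fun j => ∫ x, g (T x) ∂(ν j : Measure Ω) - ∫ x, g x ∂(ν j : Measure Ω)) l (𝓝 0)) :
    MeasurePreserving T (μ : Measure Ω) μ := by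
  have hTm : Measurable T := hT.measurable
  have : IsProbabilityMeasure ((μ : Measure Ω).map T) :=
    Measure.isProbabilityMeasure_map hTm.aemeasurable
  refine ⟨hTm, ext_of_forall_integral_eq_of_IsFiniteMeasure fun g => ?_⟩
  rw [integral_map hTm.aemeasurable g.continuous.aestronglyMeasurable]
  have hlim := ProbabilityMeasure.tendsto_iff_forall_integral_tendsto.1 hν
  exact sub_eq_zero.1 (tendsto_nhds_unique
    ((hlim (g.compContinuous ⟨T, hT⟩)).sub (hlim g)) (hinv g))

end WeakConvergence

section OrbitAverage

variable {Ω ι : Type*} [MeasurableSpace Ω] {T : Ω → Ω} {n : ℕ}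

/-- The average of the images of `σ` under the first `n` iterates of `T`; it is the `n`-th
Krylov–Bogoliubov approximation to an invariant measure. -/
noncomputable def orbitAverage (T : Ω → Ω) (n : ℕ) (σ : Measure Ω) : Measure Ω :=
  averageMeasure (Finset.range n) fun p => σ.map T^[p]

lemma isProbabilityMeasure_orbitAverage (hT : Measurable T) (hn : n ≠ 0) (σ : Measure Ω)
    [IsProbabilityMeasure σ] : IsProbabilityMeasure (orbitAverage T n σ) := by
  have (p : ℕ) : IsProbabilityMeasure (σ.map T^[p]) :=
    Measure.isProbabilityMeasure_map (hT.iterate p).aemeasurable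
  exact isProbabilityMeasure_averageMeasure (Finset.nonempty_range_iff.2 hn) _

lemma integral_orbitAverage [TopologicalSpace Ω] [OpensMeasurableSpace Ω] (hT : Measurable T)
    (n : ℕ) (σ : Measure Ω) [IsFiniteMeasure σ] (g : BoundedContinuousFunction Ω ℝ) :
    ∫ x, g x ∂(orbitAverage T n σ) = (n : ℝ)⁻¹ * ∑ p ∈ Finset.range n, ∫ x, g (T^[p] x) ∂σ := by
  rw [orbitAverage, integral_averageMeasure fun p _ => g.integrable _, Finset.card_range]
  simp only [integral_map (hT.iterate _).aemeasurable g.continuous.aestronglyMeasurable]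

lemma abs_integral_orbitAverage_comp_sub_le [TopologicalSpace Ω] [BorelSpace Ω]
    (hT : Continuous T) (n : ℕ) (σ : Measure Ω) [IsProbabilityMeasure σ]
    (g : BoundedContinuousFunction Ω ℝ) :
    |∫ x, g (T x) ∂(orbitAverage T n σ) - ∫ x, g x ∂(orbitAverage T n σ)| ≤ 2 * ‖g‖ / n := by
  have hcomp := integral_orbitAverage hT.measurable n σ (g.compContinuous ⟨T, hT⟩)
  simp only [BoundedContinuousFunction.compContinuous_apply, ContinuousMap.coe_mk,
    ← Function.iterate_succ_apply' T] at hcomp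
  have hbound (p : ℕ) : |∫ x, g (T^[p] x) ∂σ| ≤ ‖g‖ := by
    simpa using norm_integral_le_of_norm_le_const (μ := σ) (f := fun x => g (T^[p] x))
      (.of_forall fun x => g.norm_coe_le_norm _)
  rw [hcomp, integral_orbitAverage hT.measurable, ← mul_sub, ← Finset.sum_sub_distrib,
    Finset.sum_range_sub fun p => ∫ x, g (T^[p] x) ∂σ, abs_mul, abs_inv, Nat.abs_cast,
    inv_mul_eq_div]
  gcongr
  linarith [abs_sub (∫ x, g (T^[n] x) ∂σ) (∫ x, g (T^[0] x) ∂σ), hbound n, hbound 0]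

lemma mul_le_sum_range_add_mul_of_monotone {a b : ℕ → ℝ} (ha : Monotone a) {q : ℕ}
    (hab : ∀ p, a (p + q) ≤ a p + b p) (n : ℕ) :
    q * a n ≤ ∑ p ∈ Finset.range n, b p + q * a q := by
  have hsum : ∑ p ∈ Finset.range n, a (p + q) ≤
      ∑ p ∈ Finset.range n, a p + ∑ p ∈ Finset.range n, b p := by
    rw [← Finset.sum_add_distrib]
    exact Finset.sum_le_sum fun p _ => hab p
  have hsplit : ∑ p ∈ Finset.range n, a (p + q) + ∑ p ∈ Finset.range q, a p =
      ∑ p ∈ Finset.range n, a p + ∑ p ∈ Finset.range q, a (n + p) := by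
    simp only [← Finset.sum_range_add, add_comm _ q]
    rw [Finset.sum_range_add, add_comm]
  have hlower : q * a n ≤ ∑ p ∈ Finset.range q, a (n + p) := by
    simpa using Finset.card_nsmul_le_sum (Finset.range q) (fun p => a (n + p)) (a n)
      fun p _ => ha (Nat.le_add_right n p)
  have hupper : ∑ p ∈ Finset.range q, a p ≤ q * a q := by
    simpa using Finset.sum_le_card_nsmul (Finset.range q) a (a q)
      fun p hp => ha (Finset.mem_range.1 hp).le
  linarith

variable [Fintype ι] [MeasurableSpace ι] [MeasurableSingletonClass ι] {f : Ω → ι}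

lemma mul_shannonEntropy_itinerary_le_orbitAverage (hT : Measurable T) (hf : Measurable f)
    (σ : Measure Ω) [IsProbabilityMeasure σ] (q n : ℕ) :
    q * shannonEntropy σ (itinerary T f (Finset.range n)) ≤
      n * shannonEntropy (orbitAverage T n σ) (itinerary T f (Finset.range q)) +
        q * shannonEntropy σ (itinerary T f (Finset.range q)) := by
  have subadd (p : ℕ) : shannonEntropy σ (itinerary T f (Finset.range (p + q))) ≤
      shannonEntropy σ (itinerary T f (Finset.range p)) +
        shannonEntropy (σ.map T^[p]) (itinerary T f (Finset.range q)) := by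
    have hunion : Finset.range (p + q) =
        Finset.range p ∪ (Finset.range q).image (· + p) := by
      rw [Finset.range_eq_Ico (a := q), Finset.image_add_right_Ico]; grind
    rw [hunion, ← shannonEntropy_itinerary_image_add hT hf]
    exact shannonEntropy_itinerary_union_le hT hf _ _
  have concave := sum_shannonEntropy_le_card_mul (s := Finset.range n) (fun p => σ.map T^[p])
    (itinerary T f (Finset.range q))
  rw [Finset.card_range] at concave
  exact (mul_le_sum_range_add_mul_of_monotone (fun i j hij =>
    shannonEntropy_itinerary_mono hT hf (Finset.range_mono hij)) subadd n).trans
      (add_le_add_left concave _)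

lemma mul_le_shannonEntropy_orbitAverage_add_div (hT : Measurable T) (hf : Measurable f)
    (σ : Measure Ω) [IsProbabilityMeasure σ] (hn : n ≠ 0) {c : ℝ}
    (hc : n * c ≤ shannonEntropy σ (itinerary T f (Finset.range n))) (q : ℕ) :
    q * c ≤ shannonEntropy (orbitAverage T n σ) (itinerary T f (Finset.range q)) +
      q * Real.log (Fintype.card ({i // i ∈ Finset.range q} → ι)) / n := by
  have hn' : (0 : ℝ) < n := by exact_mod_cast hn.pos
  refine le_of_mul_le_mul_left ?_ hn'
  calc n * (q * c) = q * (n * c) := by ring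
    _ ≤ q * shannonEntropy σ (itinerary T f (Finset.range n)) := by gcongr
    _ ≤ n * shannonEntropy (orbitAverage T n σ) (itinerary T f (Finset.range q)) +
        q * shannonEntropy σ (itinerary T f (Finset.range q)) :=
      mul_shannonEntropy_itinerary_le_orbitAverage hT hf σ q n
    _ ≤ n * shannonEntropy (orbitAverage T n σ) (itinerary T f (Finset.range q)) +
        q * Real.log (Fintype.card ({i // i ∈ Finset.range q} → ι)) := by
      gcongr
      exact shannonEntropy_le_log_card (measurable_itinerary hT hf _)
    _ = n * (shannonEntropy (orbitAverage T n σ) (itinerary T f (Finset.range q)) +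
        q * Real.log (Fintype.card ({i // i ∈ Finset.range q} → ι)) / n) := by field_simp

lemma log_card_le_shannonEntropy_averageMeasure_dirac {E : Finset Ω} (hE : E.Nonempty)
    (hf : Measurable f) (hinj : Set.InjOn f E) :
    Real.log E.card ≤ shannonEntropy (averageMeasure E Measure.dirac) f := by
  classical
  have := isProbabilityMeasure_averageMeasure hE Measure.dirac
  have atom_le (i : ι) : (averageMeasure E Measure.dirac).real (f ⁻¹' {i}) ≤ (E.card : ℝ)⁻¹ := by
    have hdirac (e : Ω) : (Measure.dirac e).real (f ⁻¹' {i}) = if f e = i then 1 else 0 := by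
      rw [measureReal_def, Measure.dirac_apply' _ (hf (.singleton i))]
      by_cases h : f e = i <;> simp [h]
    have hcard : (E.filter fun e => f e = i).card ≤ 1 := by
      refine Finset.card_le_one.2 fun x hx y hy => ?_
      rw [Finset.mem_filter] at hx hy
      exact hinj hx.1 hy.1 (hx.2.trans hy.2.symm)
    rw [averageMeasure_real]
    simp only [hdirac, Finset.sum_boole]
    exact mul_le_of_le_one_right (by positivity) (by exact_mod_cast hcard)
  simpa using neg_log_le_shannonEntropy hf atom_le

end OrbitAverage

section Misiurewicz

open scoped Topology

variable [MeasurableSpace X] [CompactSpace X]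

lemma exists_log_spaN_le_shannonEntropy [Nonempty X] {T : X → X} (hT : Measurable T)
    (F : Finset ℕ) {ε : ℝ} (hε : 0 < ε) :
    ∃ σ : Measure X, IsProbabilityMeasure σ ∧ ∀ (k : ℕ) (f : X → Fin k), Measurable f →
      (∀ x y, f x = f y → dist x y ≤ ε) →
        Real.log (spaN T F ε) ≤ shannonEntropy σ (itinerary T f F) := by
  obtain ⟨E, hsep, hcover⟩ := exists_isSeparated_isCover_bowenRel T F hε
  have hE : E.Nonempty := by simpa using hcover.nonempty Set.univ_nonempty
  refine ⟨averageMeasure E Measure.dirac, isProbabilityMeasure_averageMeasure hE _,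
    fun k f hf hfine => ?_⟩
  calc Real.log (spaN T F ε)
    _ ≤ Real.log E.card := Real.log_le_log (by exact_mod_cast spaN_pos T F hε)
      (by exact_mod_cast spaN_le_card_of_isCover hcover)
    _ ≤ shannonEntropy (averageMeasure E Measure.dirac) (itinerary T f F) :=
      log_card_le_shannonEntropy_averageMeasure_dirac hE (measurable_itinerary hT hf F)
        fun x hx y hy hxy => hsep.eq hx hy (not_not.2 (bowenRel_of_itinerary_eq hfine hxy))

variable [BorelSpace X]

lemma exists_fine_ae_eventually_eq (μ : Measure X) [SFinite μ] {ε : ℝ} (hε : 0 < ε) :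
    ∃ (k : ℕ) (f : X → Fin k), Measurable f ∧ (∀ x y, f x = f y → dist x y ≤ ε) ∧
      ∀ᵐ x ∂μ, ∀ᶠ y in 𝓝 x, f y = f x := by
  classical
  have null_sphere (z : X) : ∃ r ∈ Set.Ioo 0 (ε / 2), μ (frontier (Metric.ball z r)) = 0 := by
    simpa only [Metric.thickening_singleton] using
      exists_null_frontier_thickening μ {z} (half_pos hε)
  choose r hr hnull using null_sphere
  obtain ⟨t, -, hcover⟩ := (isCompact_univ (X := X)).elim_nhds_subcover
    (fun z => Metric.ball z (r z)) fun z _ => Metric.ball_mem_nhds z (hr z).1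
  let g : X → {z // z ∈ t} → Prop := fun x z => x ∈ Metric.ball (z : X) (r z)
  have hg : Measurable g :=
    measurable_pi_lambda _ fun z => measurable_mem.2 Metric.isOpen_ball.measurableSet
  have g_fine (x y : X) (hxy : g x = g y) : dist x y ≤ ε := by
    obtain ⟨z, hz, hxz⟩ := Set.mem_iUnion₂.1 (hcover (Set.mem_univ x))
    have hyz : dist y z < r z := (congrFun hxy ⟨z, hz⟩).mp hxz
    linarith [dist_triangle_right x y z, Metric.mem_ball.1 hxz, (hr z).2]
  have g_locally_const : ∀ᵐ x ∂μ, ∀ᶠ y in 𝓝 x, g y = g x := by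
    have off_spheres : ∀ᵐ x ∂μ, ∀ z : {z // z ∈ t}, x ∉ frontier (Metric.ball (z : X) (r z)) :=
      ae_all_iff.2 fun z => measure_eq_zero_iff_ae_notMem.1 (hnull z)
    filter_upwards [off_spheres] with x hx
    filter_upwards [eventually_all.2 fun z => eventually_mem_iff_of_notMem_frontier (hx z)]
      with y hy
    exact funext fun z => propext (hy z)
  let e := Fintype.equivFin ({z // z ∈ t} → Prop)
  refine ⟨_, e ∘ g, Measurable.of_discrete.comp hg, fun x y hxy => g_fine x y (e.injective hxy), ?_⟩
  filter_upwards [g_locally_const] with x hx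
  filter_upwards [hx] with y hy
  exact congrArg e hy

lemma exists_tendsto_measurePreserving {T : X → X} (hT : Continuous T)
    {ν : ℕ → ProbabilityMeasure X}
    (hinv : ∀ g : BoundedContinuousFunction X ℝ,
      Tendsto (fun j => ∫ x, g (T x) ∂(ν j : Measure X) - ∫ x, g x ∂(ν j : Measure X))
        atTop (𝓝 0)) :
    ∃ (U : Ultrafilter ℕ) (μ : ProbabilityMeasure X), (U : Filter ℕ) ≤ atTop ∧
      Tendsto ν U (𝓝 μ) ∧ MeasurePreserving T (μ : Measure X) μ := by
  obtain ⟨μ, -, hμ⟩ := isCompact_univ.ultrafilter_le_nhds ((hyperfilter ℕ).map ν) (by simp)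
  exact ⟨hyperfilter ℕ, μ, Nat.hyperfilter_le_atTop, hμ,
    measurePreserving_of_tendsto_of_asymptotically_invariant hT hμ fun g =>
      (hinv g).mono_left Nat.hyperfilter_le_atTop⟩

lemma exists_measurePreserving_mul_le_shannonEntropy [Nonempty X] {T : X → X} (hT : Continuous T)
    {ε c : ℝ} (hε : 0 < ε)
    (hc : ∃ᶠ n : ℕ in atTop, c ≤ Real.log (spaN T (Finset.range n) ε) / n) :
    ∃ μ : Measure X, IsProbabilityMeasure μ ∧ MeasurePreserving T μ μ ∧
      ∃ (k : ℕ) (f : X → Fin k), Measurable f ∧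
        ∀ q : ℕ, q * c ≤ shannonEntropy μ (itinerary T f (Finset.range q)) := by
  obtain ⟨φ, hφ, hcφ⟩ := extraction_of_frequently_atTop (hc.and_eventually (eventually_ne_atTop 0))
  choose σ hσ hle using fun j =>
    exists_log_spaN_le_shannonEntropy hT.measurable (Finset.range (φ j)) hε
  let ν (j : ℕ) : ProbabilityMeasure X :=
    ⟨orbitAverage T (φ j) (σ j), isProbabilityMeasure_orbitAverage hT.measurable (hcφ j).2 (σ j)⟩
  have hvanish (C : ℝ) : Tendsto (fun j => C / (φ j : ℝ)) atTop (𝓝 0) :=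
    (tendsto_const_div_atTop_nhds_zero_nat C).comp hφ.tendsto_atTop
  obtain ⟨U, μ, hU, hμ, hTμ⟩ := exists_tendsto_measurePreserving (ν := ν) hT fun g =>
    squeeze_zero_norm
      (fun j => abs_integral_orbitAverage_comp_sub_le hT (φ j) (σ j) g) (hvanish (2 * ‖g‖))
  obtain ⟨k, f, hf, hfine, hconst⟩ := exists_fine_ae_eventually_eq (μ : Measure X) hε
  refine ⟨μ, inferInstance, hTμ, k, f, hf, fun q => ?_⟩
  have hlim := (tendsto_shannonEntropy hμ
    (ae_eventually_itinerary_eq hT hTμ hconst (Finset.range q))).add ((hvanish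
      (q * Real.log (Fintype.card ({i // i ∈ Finset.range q} → Fin k)))).mono_left hU)
  rw [add_zero] at hlim
  refine ge_of_tendsto' hlim fun j => ?_
  obtain ⟨hcj, hφj⟩ := hcφ j
  rw [le_div_iff₀' (by exact_mod_cast hφj.pos)] at hcj
  exact mul_le_shannonEntropy_orbitAverage_add_div hT.measurable hf (σ j) hφj
    (hcj.trans (hle j k f hf hfine)) q

end Misiurewicz

section VariationalPrinciple

open Pointwise

variable {T : X → X} {ε : ℝ}

lemma htopN_eq (T : X → X) : htopN T = ⨆ (ε : ℝ) (_ : 0 < ε),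
    limsup (fun n : ℕ => ((Real.log (spaN T (Finset.range n) ε) / n : ℝ) : EReal)) atTop := by
  have image_pred_Icc (n : ℕ) : (Finset.Icc 1 n).image (· - 1) = Finset.range n := by
    ext x
    simp only [Finset.mem_image, Finset.mem_Icc, Finset.mem_range]
    exact ⟨by rintro ⟨i, hi, rfl⟩; omega, fun hx => ⟨x + 1, by omega, by omega⟩⟩
  simp only [htopN, seqEntTop, image_pred_Icc]

lemma limsup_le_htopN (T : X → X) (hε : 0 < ε) :
    limsup (fun n : ℕ => ((Real.log (spaN T (Finset.range n) ε) / n : ℝ) : EReal)) atTop ≤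
      htopN T :=
  htopN_eq T ▸ le_iSup₂_of_le ε hε le_rfl

lemma log_spaN_div_nonneg (T : X → X) (F : Finset ℕ) (ε : ℝ) (n : ℕ) :
    0 ≤ Real.log (spaN T F ε) / n :=
  div_nonneg (Real.log_natCast_nonneg _) n.cast_nonneg

lemma htopN_nonneg (T : X → X) : 0 ≤ htopN T :=
  le_trans (le_limsup_of_frequently_le'
    (.of_forall fun _ => EReal.coe_nonneg.2 (log_spaN_div_nonneg T _ 1 _)))
    (limsup_le_htopN T one_pos)

lemma KA_nonneg (A : ℕ → ℕ) : 0 ≤ KA A :=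
  le_iSup_of_le 0 (le_limsup_of_frequently_le'
    (.of_forall fun _ => EReal.coe_nonneg.2 (by positivity)))

lemma limsup_log_spaN_two_mul_le [CompactSpace X] [Nonempty X] (T : X → X) (A : ℕ → ℕ)
    (hε : 0 < ε) {m : ℕ} (hm : 0 < m) :
    limsup (fun n : ℕ =>
      ((Real.log (spaN T ((Finset.Icc 1 n).image A) (2 * ε)) / n : ℝ) : EReal)) atTop ≤
        KA A * ((Real.log (spaN T (Finset.range m) ε) / m : ℝ) : EReal) := by
  set u : ℝ := Real.log (spaN T (Finset.range m) ε) / m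
  have hu : (0 : EReal) ≤ u := EReal.coe_nonneg.2 (log_spaN_div_nonneg T _ ε m)
  let ratio (n : ℕ) : ℝ := ((Finset.Icc 1 n).image A + Finset.range m).card / n
  calc _ ≤ limsup (fun n : ℕ => (u : EReal) * (ratio n : EReal)) atTop := by
        refine limsup_le_limsup (.of_forall fun n => ?_)
        dsimp only [ratio]
        rw [← EReal.coe_mul, EReal.coe_le_coe_iff, mul_comm u, div_mul_eq_mul_div]
        gcongr
        exact log_spaN_two_mul_le_card_add_range_mul T _ hε hm
    _ = u * limsup (fun n : ℕ => (ratio n : EReal)) atTop :=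
        EReal.limsup_const_mul_of_nonneg_of_ne_top hu (EReal.coe_ne_top u)
    _ ≤ u * KA A :=
        mul_le_mul_of_nonneg_left (le_iSup_of_le m le_rfl) hu
    _ = KA A * u := mul_comm _ _

lemma seqEntTop_le_KA_mul_htopN [CompactSpace X] [Nonempty X] (T : X → X) (A : ℕ → ℕ)
    (h : ¬(KA A = ⊤ ∧ htopN T = 0)) : seqEntTop T A ≤ KA A * htopN T := by
  by_cases hK : KA A = ⊤
  · have htop_pos : 0 < htopN T := (htopN_nonneg T).lt_of_ne' fun h0 => h ⟨hK, h0⟩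
    rw [hK, EReal.top_mul_of_pos htop_pos]
    exact le_top
  refine iSup₂_le fun δ hδ => ?_
  obtain ⟨ε, rfl⟩ : ∃ ε, δ = 2 * ε := ⟨δ / 2, by ring⟩
  have hε : 0 < ε := by linarith
  calc _ ≤ limsup (fun m : ℕ =>
        KA A * ((Real.log (spaN T (Finset.range m) ε) / m : ℝ) : EReal)) atTop :=
        le_limsup_of_frequently_le' ((eventually_gt_atTop 0).frequently.mono
          fun _ => limsup_log_spaN_two_mul_le T A hε)
    _ = KA A * limsup (fun m : ℕ =>
        ((Real.log (spaN T (Finset.range m) ε) / m : ℝ) : EReal)) atTop :=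
        EReal.limsup_const_mul_of_nonneg_of_ne_top (KA_nonneg A) hK
    _ ≤ KA A * htopN T :=
        mul_le_mul_of_nonneg_left (limsup_le_htopN T hε) (KA_nonneg A)

lemma limsup_card_div_mul_le_iSup_seqEntMeas [MeasurableSpace X] [BorelSpace X] [CompactSpace X]
    [Nonempty X] (hT : Continuous T) (hε : 0 < ε) {c : ℝ}
    (hc : ∃ᶠ n : ℕ in atTop, c ≤ Real.log (spaN T (Finset.range n) ε) / n) (A : ℕ → ℕ) (m : ℕ) :
    limsup (fun n : ℕ =>
      ((((Finset.Icc 1 n).image A + Finset.range m).card / n * c : ℝ) : EReal)) atTop ≤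
        ⨆ (μ : Measure X) (_ : IsProbabilityMeasure μ ∧ MeasurePreserving T μ μ),
          seqEntMeas μ T A := by
  obtain ⟨μ, hμ, hpres, k, f, hf, hent⟩ := exists_measurePreserving_mul_le_shannonEntropy hT hε hc
  exact le_iSup₂_of_le μ ⟨hμ, hpres⟩ (limsup_card_div_mul_le_seqEntMeas hpres hf hent A m)

lemma KA_mul_htopN_le_iSup_seqEntMeas [MeasurableSpace X] [BorelSpace X] [CompactSpace X]
    [Nonempty X] (hT : Continuous T) (A : ℕ → ℕ) :
    KA A * htopN T ≤
      ⨆ (μ : Measure X) (_ : IsProbabilityMeasure μ ∧ MeasurePreserving T μ μ),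
        seqEntMeas μ T A := by
  refine EReal.mul_le_of_forall_lt_of_nonneg (KA_nonneg A) ?_ fun a ha b hb => ?_
  · have hfreq : ∃ᶠ n : ℕ in atTop, 0 ≤ Real.log (spaN T (Finset.range n) 1) / n :=
      .of_forall fun n => log_spaN_div_nonneg T (Finset.range n) 1 n
    simpa using limsup_card_div_mul_le_iSup_seqEntMeas hT one_pos hfreq A 0
  lift a to ℝ using ⟨ha.2.ne_top, (EReal.bot_lt_zero.trans ha.1).ne'⟩
  lift b to ℝ using ⟨hb.2.ne_top, (EReal.bot_lt_zero.trans hb.1).ne'⟩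
  obtain ⟨m, hm⟩ := lt_iSup_iff.1 ha.2
  have hb_lt := hb.2
  rw [htopN_eq] at hb_lt
  simp only [lt_iSup_iff] at hb_lt
  obtain ⟨ε, hε, hb_lt⟩ := hb_lt
  have hfreq : ∃ᶠ n : ℕ in atTop, b ≤ Real.log (spaN T (Finset.range n) ε) / n :=
    (frequently_lt_of_lt_limsup (h := hb_lt)).mono fun _ hn => (EReal.coe_lt_coe_iff.1 hn).le
  refine le_trans (le_limsup_of_frequently_le' ((frequently_lt_of_lt_limsup (h := hm)).mono
    fun n hn => ?_)) (limsup_card_div_mul_le_iSup_seqEntMeas hT hε hfreq A m)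
  have hb0 : 0 ≤ b := EReal.coe_nonneg.1 hb.1.le
  rw [← EReal.coe_mul, EReal.coe_le_coe_iff]
  exact mul_le_mul_of_nonneg_right (EReal.coe_lt_coe_iff.1 hn).le hb0

end VariationalPrinciple

/-- Variational principle for sequence entropy: unless
(`K(A) = ∞` and `h_top(T) = 0`), the supremum of the measure-theoretic sequence entropies
over all `T`-invariant Borel probability measures equals the topological sequence entropy. -/
theorem stmt4 [MeasurableSpace X] [BorelSpace X] [CompactSpace X] [Nonempty X]
    (T : X → X) (hT : Continuous T) (A : ℕ → ℕ)
    (h : ¬(KA A = ⊤ ∧ htopN T = 0)) :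
    (⨆ (μ : Measure X) (_ : IsProbabilityMeasure μ ∧ MeasurePreserving T μ μ),
        seqEntMeas μ T A) = seqEntTop T A := by
  refine le_antisymm (iSup₂_le fun μ hμ => ?_) ?_
  · have := hμ.1
    exact seqEntMeas_le_seqEntTop hμ.2 A
  · calc seqEntTop T A ≤ KA A * htopN T := seqEntTop_le_KA_mul_htopN T A h
      _ ≤ ⨆ (μ : Measure X) (_ : IsProbabilityMeasure μ ∧ MeasurePreserving T μ μ),
          seqEntMeas μ T A := KA_mul_htopN_le_iSup_seqEntMeas hT A
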